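/- There exists a universal constant K > 0 such that for all α, β with αβ > 0 and |α| + |β| < 1, and all k, ℓ ∈ ℤ, the stationary solution covariances R_{k,ℓ} = Cov(X_{k,ℓ}, X_{0,0}) of the spatial AR equation X_{k,ℓ} = α X_{k−1,ℓ} + β X_{k,ℓ−1} + ε_{k,ℓ} satisfy |R_{k−1,ℓ+1} − R_{k,ℓ}| ≤ K/(αβ)^{3/2}. -/

import Mathlib

/-- The covariance `R_{k,ℓ} = Cov(X_{k,ℓ}, X_{0,0})` of the stationary solution of the
spatial AR equation `X_{k,ℓ} = α X_{k−1,ℓ} + β X_{k,ℓ−1} + ε_{k,ℓ}` with i.i.d. noise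
of mean `0` and variance `1`, computed from the moving-average representation
`X_{k,ℓ} = ∑_{i≤k, j≤ℓ} C(k+ℓ−i−j, k−i) α^{k−i} β^{ℓ−j} ε_{i,j}`. -/
noncomputable def Rcov (α β : ℝ) (k ℓ : ℤ) : ℝ :=
  ∑' p : ℤ × ℤ,
    if p.1 ≤ min k 0 ∧ p.2 ≤ min ℓ 0 then
      ((k + ℓ - p.1 - p.2).toNat.choose (k - p.1).toNat : ℝ) *
        α ^ (k - p.1).toNat * β ^ (ℓ - p.2).toNat *
        ((-p.1 - p.2).toNat.choose (-p.1).toNat : ℝ) *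
        α ^ (-p.1).toNat * β ^ (-p.2).toNat
    else 0

/-- The moving-average coefficient `C(i+j, i) α^i β^j`, extended by zero off the quadrant. -/
noncomputable def maCoeff (α β : ℝ) (i j : ℤ) : ℝ :=
  if 0 ≤ i ∧ 0 ≤ j then ((i + j).toNat.choose i.toNat : ℝ) * α ^ i.toNat * β ^ j.toNat else 0

lemma maCoeff_natCast (α β : ℝ) (i j : ℕ) :
    maCoeff α β i j = ((i + j).choose i : ℝ) * α ^ i * β ^ j := by
  have h : ((i : ℤ) + j).toNat = i + j := by omega
  simp [maCoeff, h]

lemma maCoeff_of_neg (α β : ℝ) {i j : ℤ} (h : i < 0 ∨ j < 0) : maCoeff α β i j = 0 :=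
  if_neg (by omega)

lemma maCoeff_rec (α β : ℝ) (i j : ℤ) :
    maCoeff α β i j = α * maCoeff α β (i - 1) j + β * maCoeff α β i (j - 1) +
      if i = 0 ∧ j = 0 then 1 else 0 := by
  by_cases h : i < 0 ∨ j < 0
  · rw [maCoeff_of_neg α β h, maCoeff_of_neg α β (by omega : i - 1 < 0 ∨ j < 0),
      maCoeff_of_neg α β (by omega : i < 0 ∨ j - 1 < 0), if_neg (by omega)]
    ring
  push Not at h
  obtain ⟨hi, hj⟩ := h
  lift i to ℕ using hi
  lift j to ℕ using hj
  rcases i with _ | i <;> rcases j with _ | j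
  · simp [maCoeff]
  · have e : ((j + 1 : ℕ) : ℤ) - 1 = (j : ℕ) := by push_cast; ring
    rw [e, maCoeff_natCast, maCoeff_natCast, maCoeff_of_neg α β (by left; simp),
      if_neg (by omega)]
    simp; ring
  · have e : ((i + 1 : ℕ) : ℤ) - 1 = (i : ℕ) := by push_cast; ring
    rw [e, maCoeff_natCast, maCoeff_natCast, maCoeff_of_neg α β (by right; simp),
      if_neg (by omega)]
    simp; ring
  · have e : ((i + 1 : ℕ) : ℤ) - 1 = (i : ℕ) := by push_cast; ring
    have e' : ((j + 1 : ℕ) : ℤ) - 1 = (j : ℕ) := by push_cast; ring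
    rw [e, e', maCoeff_natCast, maCoeff_natCast, maCoeff_natCast, if_neg (by omega),
      show i + 1 + (j + 1) = (i + (j + 1)) + 1 by ring, Nat.choose_succ_succ,
      show i + 1 + j = i + (j + 1) by ring]
    push_cast
    ring

lemma abs_maCoeff (α β : ℝ) (i j : ℤ) : |maCoeff α β i j| = maCoeff |α| |β| i j := by
  unfold maCoeff
  split_ifs <;> simp [abs_mul, abs_pow]

lemma summable_abs_maCoeff {α β : ℝ} (h : |α| + |β| < 1) :
    Summable fun p : ℤ × ℤ ↦ |maCoeff α β p.1 p.2| := by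
  simp only [abs_maCoeff]
  have hinj : Function.Injective fun p : ℕ × ℕ ↦ ((p.1 : ℤ), (p.2 : ℤ)) := by
    rintro ⟨a, b⟩ ⟨c, d⟩ hp
    simpa using hp
  rw [← hinj.summable_iff]
  swap
  · rintro ⟨i, j⟩ hp
    refine maCoeff_of_neg _ _ ?_
    by_contra! hij
    exact hp ⟨(i.toNat, j.toNat), by simp [hij.1, hij.2]⟩
  rw [← Finset.HasAntidiagonal.sigmaAntidiagonalEquivProd.summable_iff]
  have hnn : ∀ x : Σ n : ℕ, Finset.HasAntidiagonal.antidiagonal n,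
      0 ≤ (((fun p : ℤ × ℤ ↦ maCoeff |α| |β| p.1 p.2) ∘
        fun p : ℕ × ℕ ↦ ((p.1 : ℤ), (p.2 : ℤ))) ∘
          Finset.HasAntidiagonal.sigmaAntidiagonalEquivProd) x := by
    intro x
    simp only [Function.comp, ← abs_maCoeff]
    positivity
  rw [summable_sigma_of_nonneg hnn]
  refine ⟨fun n ↦ (Set.toFinite _).summable _, ?_⟩
  have hsum : ∀ n : ℕ, (∑' y : Finset.HasAntidiagonal.antidiagonal n,
      (((fun p : ℤ × ℤ ↦ maCoeff |α| |β| p.1 p.2) ∘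
        fun p : ℕ × ℕ ↦ ((p.1 : ℤ), (p.2 : ℤ))) ∘
          Finset.HasAntidiagonal.sigmaAntidiagonalEquivProd) ⟨n, y⟩) =
      (|α| + |β|) ^ n := by
    intro n
    rw [(Commute.all |α| |β|).add_pow', ← Finset.sum_coe_sort, tsum_fintype]
    refine Fintype.sum_congr _ _ fun y ↦ ?_
    have hy := Finset.HasAntidiagonal.mem_antidiagonal.mp y.2
    simp only [Function.comp, Finset.HasAntidiagonal.sigmaAntidiagonalEquivProd_apply,
      maCoeff_natCast, hy, nsmul_eq_mul]
    ring
  simp only [hsum]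
  exact summable_geometric_of_lt_one (by positivity) h

lemma Rcov_eq_tsum (α β : ℝ) (k ℓ : ℤ) :
    Rcov α β k ℓ = ∑' p : ℤ × ℤ, maCoeff α β (k - p.1) (ℓ - p.2) * maCoeff α β (-p.1) (-p.2) := by
  refine tsum_congr fun p ↦ ?_
  split_ifs with h
  · rw [le_min_iff, le_min_iff] at h
    rw [maCoeff, maCoeff, if_pos (by omega), if_pos (by omega),
      show k + ℓ - p.1 - p.2 = k - p.1 + (ℓ - p.2) by ring, ← sub_eq_add_neg]
    ring
  · rw [le_min_iff, le_min_iff] at h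
    by_cases h' : 0 ≤ -p.1 ∧ 0 ≤ -p.2
    · rw [maCoeff_of_neg α β (by omega : k - p.1 < 0 ∨ ℓ - p.2 < 0), zero_mul]
    · rw [maCoeff_of_neg α β (by omega : -p.1 < 0 ∨ -p.2 < 0), mul_zero]

lemma abs_maCoeff_mul_le {α β : ℝ} (h : |α| + |β| < 1) (k ℓ : ℤ) (p : ℤ × ℤ) :
    |maCoeff α β (k - p.1) (ℓ - p.2) * maCoeff α β (-p.1) (-p.2)| ≤
      (∑' q : ℤ × ℤ, |maCoeff α β q.1 q.2|) * |maCoeff α β (-p.1) (-p.2)| := by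
  rw [abs_mul]
  gcongr
  exact (summable_abs_maCoeff h).le_tsum (k - p.1, ℓ - p.2) fun _ _ ↦ abs_nonneg _

lemma summable_mul_abs_maCoeff_neg {α β : ℝ} (h : |α| + |β| < 1) :
    Summable fun p : ℤ × ℤ ↦
      (∑' q : ℤ × ℤ, |maCoeff α β q.1 q.2|) * |maCoeff α β (-p.1) (-p.2)| :=
  ((Equiv.neg (ℤ × ℤ)).summable_iff.mpr (summable_abs_maCoeff h)).mul_left _

lemma summable_maCoeff_mul {α β : ℝ} (h : |α| + |β| < 1) (k ℓ : ℤ) :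
    Summable fun p : ℤ × ℤ ↦ maCoeff α β (k - p.1) (ℓ - p.2) * maCoeff α β (-p.1) (-p.2) :=
  .of_norm_bounded (summable_mul_abs_maCoeff_neg h) (abs_maCoeff_mul_le h k ℓ)

lemma exists_Rcov_le {α β : ℝ} (h : |α| + |β| < 1) : ∃ B, ∀ k ℓ, Rcov α β k ℓ ≤ B := by
  refine ⟨∑' p : ℤ × ℤ, (∑' q : ℤ × ℤ, |maCoeff α β q.1 q.2|) * |maCoeff α β (-p.1) (-p.2)|,
    fun k ℓ ↦ ?_⟩
  rw [Rcov_eq_tsum]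
  exact (summable_maCoeff_mul h k ℓ).tsum_le_tsum
    (fun p ↦ (le_abs_self _).trans (abs_maCoeff_mul_le h k ℓ p)) (summable_mul_abs_maCoeff_neg h)

lemma Rcov_neg (α β : ℝ) (k ℓ : ℤ) : Rcov α β (-k) (-ℓ) = Rcov α β k ℓ := by
  rw [Rcov_eq_tsum, Rcov_eq_tsum, ← (Equiv.subRight (k, ℓ)).tsum_eq]
  refine tsum_congr fun p ↦ ?_
  simp only [Equiv.subRight_apply, Prod.fst_sub, Prod.snd_sub]
  rw [mul_comm]
  congr 2 <;> ring

lemma Rcov_rec {α β : ℝ} (h : |α| + |β| < 1) (k ℓ : ℤ) :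
    Rcov α β k ℓ = α * Rcov α β (k - 1) ℓ + β * Rcov α β k (ℓ - 1) + maCoeff α β (-k) (-ℓ) := by
  have hδ : HasSum (fun p : ℤ × ℤ ↦
      (if k - p.1 = 0 ∧ ℓ - p.2 = 0 then 1 else 0) * maCoeff α β (-p.1) (-p.2))
      (maCoeff α β (-k) (-ℓ)) := by
    convert hasSum_single (k, ℓ) _ using 1
    · simp
    · rintro ⟨i, j⟩ hp
      rw [if_neg, zero_mul]
      rintro ⟨h1, h2⟩
      exact hp (Prod.ext (by simp at h1 ⊢; omega) (by simp at h2 ⊢; omega))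
  have hsum := (((summable_maCoeff_mul h (k - 1) ℓ).hasSum.mul_left α).add
    ((summable_maCoeff_mul h k (ℓ - 1)).hasSum.mul_left β)).add hδ
  rw [← Rcov_eq_tsum, ← Rcov_eq_tsum] at hsum
  rw [← hsum.tsum_eq, Rcov_eq_tsum]
  refine tsum_congr fun p ↦ ?_
  rw [maCoeff_rec α β (k - p.1) (ℓ - p.2), sub_right_comm k, sub_right_comm ℓ]
  ring

lemma maCoeff_mul_nonneg {α β : ℝ} (h : 0 < α * β) {i j i' j' : ℤ} (hij : i + j = i' + j') :
    0 ≤ maCoeff α β i j * maCoeff α β i' j' := by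
  by_cases hneg : (i < 0 ∨ j < 0) ∨ (i' < 0 ∨ j' < 0)
  · rcases hneg with hneg | hneg <;> simp [maCoeff_of_neg α β hneg]
  push Not at hneg
  obtain ⟨⟨hi, hj⟩, hi', hj'⟩ := hneg
  lift i to ℕ using hi
  lift j to ℕ using hj
  lift i' to ℕ using hi'
  lift j' to ℕ using hj'
  have hij : i + j = i' + j' := by omega
  simp only [maCoeff_natCast]
  rcases mul_pos_iff.mp h with ⟨hα, hβ⟩ | ⟨hα, hβ⟩
  · positivity
  · have key : α ^ i * β ^ j * (α ^ i' * β ^ j') =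
        (-α) ^ i * (-β) ^ j * ((-α) ^ i' * (-β) ^ j') := by
      rw [neg_pow α, neg_pow β, neg_pow α, neg_pow β]
      have : (-1 : ℝ) ^ i * (-1) ^ j * ((-1) ^ i' * (-1) ^ j') = 1 := by
        rw [← pow_add, ← pow_add, ← hij, ← mul_pow]
        simp
      linear_combination (-(α ^ i * β ^ j * (α ^ i' * β ^ j'))) * this
    have hα' : 0 < -α := neg_pos.mpr hα
    have hβ' : 0 < -β := neg_pos.mpr hβ
    calc 0 ≤ ((i + j).choose i : ℝ) * ((i' + j').choose i') *
          ((-α) ^ i * (-β) ^ j * ((-α) ^ i' * (-β) ^ j')) := by positivity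
      _ = _ := by rw [← key]; ring

lemma Rcov_antidiag_nonneg {α β : ℝ} (h : 0 < α * β) (k : ℤ) : 0 ≤ Rcov α β k (-k) := by
  rw [Rcov_eq_tsum]
  exact tsum_nonneg fun p ↦ maCoeff_mul_nonneg h (by ring)

lemma Rcov_antidiag_rec {α β : ℝ} (h : |α| + |β| < 1) (k : ℤ) :
    (1 - (α + β) ^ 2) * Rcov α β k (-k) =
      α * β * (Rcov α β (k + 1) (-(k + 1)) - 2 * Rcov α β k (-k) + Rcov α β (k - 1) (-(k - 1))) +
        if k = 0 then 1 else 0 := by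
  have h0 := Rcov_rec h k (-k)
  have h1 := Rcov_rec h (1 - k) k
  have h2 := Rcov_rec h (-k) (k + 1)
  rw [maCoeff_of_neg α β (by omega)] at h1 h2
  have hδ : maCoeff α β (-k) (- -k) = if k = 0 then 1 else 0 := by
    split_ifs with hk
    · simp [hk, maCoeff]
    · exact maCoeff_of_neg α β (by omega)
  rw [hδ] at h0
  have e1 := Rcov_neg α β (k - 1) (-k)
  have e2 := Rcov_neg α β k (-k - 1)
  have e3 := Rcov_neg α β k (-k)
  have e4 := Rcov_neg α β (k - 1) (-(k - 1))
  have e5 := Rcov_neg α β (k + 1) (-(k + 1))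
  ring_nf at h0 h1 h2 e1 e2 e3 e4 e5 ⊢
  rw [e1, e3, e4] at h1
  rw [e2, e3, e5] at h2
  rw [h1, h2] at h0
  linear_combination h0

/-- A function on `ℕ` that is bounded above and convex is nonincreasing. -/
lemma succ_le_of_convex_of_le {g : ℕ → ℝ} {B : ℝ} (hB : ∀ n, g n ≤ B)
    (hg : ∀ n, 0 ≤ g (n + 2) - 2 * g (n + 1) + g n) (n : ℕ) : g (n + 1) ≤ g n := by
  by_contra! hlt
  have hmono : Monotone fun m ↦ g (m + 1) - g m :=
    monotone_nat_of_le_succ fun m ↦ by have := hg m; simp only [add_assoc]; norm_num; linarith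
  have hgrow : ∀ m : ℕ, g n + m * (g (n + 1) - g n) ≤ g (n + m) := by
    intro m
    induction m with
    | zero => simp
    | succ m ih =>
      have := hmono (Nat.le_add_right n m)
      push_cast
      rw [← add_assoc]
      simp only at this
      linarith
  obtain ⟨m, hm⟩ := exists_nat_gt ((B - g n) / (g (n + 1) - g n))
  rw [div_lt_iff₀ (sub_pos.mpr hlt)] at hm
  linarith [hgrow m, hB (n + m)]

lemma Rcov_antidiag_nat_diff {α β : ℝ} (hαβ : 0 < α * β) (h : |α| + |β| < 1) (n : ℕ) :
    |Rcov α β (n + 1 : ℕ) (-(n + 1 : ℕ)) - Rcov α β n (-n)| ≤ 1 / (α * β) := by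
  set g : ℕ → ℝ := fun n ↦ Rcov α β n (-n) with hg
  change |g (n + 1) - g n| ≤ _
  have ht : 0 < 1 - (α + β) ^ 2 := by
    have := (sq_lt_one_iff_abs_lt_one (α + β)).mpr ((abs_add_le α β).trans_lt h)
    linarith
  have hconv : ∀ n, 0 ≤ g (n + 2) - 2 * g (n + 1) + g n := by
    intro n
    have hrec := Rcov_antidiag_rec h (n + 1 : ℕ)
    rw [if_neg (by omega), show ((n + 1 : ℕ) : ℤ) + 1 = (n + 2 : ℕ) by push_cast; ring,
      show ((n + 1 : ℕ) : ℤ) - 1 = n by push_cast; ring, add_zero] at hrec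
    have := mul_nonneg ht.le (Rcov_antidiag_nonneg hαβ (n + 1 : ℕ))
    rw [hrec] at this
    exact nonneg_of_mul_nonneg_right this hαβ
  obtain ⟨B, hB⟩ := exists_Rcov_le h
  have hanti := succ_le_of_convex_of_le (fun n ↦ hB n (-n)) hconv n
  have hmono : Monotone fun m ↦ g (m + 1) - g m :=
    monotone_nat_of_le_succ fun m ↦ by have := hconv m; simp only [add_assoc]; norm_num; linarith
  have h0n : g 1 - g 0 ≤ g (n + 1) - g n := hmono (Nat.zero_le n)
  have h0 : -(1 / (α * β)) ≤ g 1 - g 0 := by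
    have hrec := Rcov_antidiag_rec h 0
    have hsymm := Rcov_neg α β 1 (-1)
    have hnn := mul_nonneg ht.le (Rcov_antidiag_nonneg hαβ 0)
    have e1 : g 1 = Rcov α β 1 (-1) := by simp [hg]
    have e0 : g 0 = Rcov α β 0 0 := by simp [hg]
    norm_num at hrec hsymm hnn
    rw [hsymm, ← e1, ← e0] at hrec
    rw [← e0] at hnn
    rw [← neg_div, div_le_iff₀ hαβ]
    linarith
  have hpos : 0 < 1 / (α * β) := by positivity
  change g (n + 1) ≤ g n at hanti
  rw [abs_le]
  constructor <;> linarith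

lemma Rcov_antidiag_diff {α β : ℝ} (hαβ : 0 < α * β) (h : |α| + |β| < 1) (k : ℤ) :
    |Rcov α β (k - 1) (-(k - 1)) - Rcov α β k (-k)| ≤ 1 / (α * β) := by
  rcases le_or_gt k 0 with hk | hk
  · obtain ⟨n, rfl⟩ : ∃ n : ℕ, k = -n := ⟨(-k).toNat, by omega⟩
    have := Rcov_antidiag_nat_diff hαβ h n
    rw [← Rcov_neg, ← Rcov_neg α β n] at this
    convert this using 5 <;> push_cast <;> ring
  · obtain ⟨n, rfl⟩ : ∃ n : ℕ, k = (n + 1 : ℕ) := ⟨(k - 1).toNat, by omega⟩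
    have := Rcov_antidiag_nat_diff hαβ h n
    rw [abs_sub_comm] at this
    convert this using 5 <;> push_cast <;> ring

lemma Rcov_diff_of_nonneg {α β : ℝ} (hαβ : 0 < α * β) (h : |α| + |β| < 1) (m : ℕ) :
    ∀ k ℓ : ℤ, k + ℓ = m → |Rcov α β (k - 1) (ℓ + 1) - Rcov α β k ℓ| ≤ 1 / (α * β) := by
  induction m with
  | zero =>
    intro k ℓ hkl
    obtain rfl : ℓ = -k := by simp at hkl; omega
    have := Rcov_antidiag_diff hαβ h k
    rwa [show -(k - 1) = -k + 1 by ring] at this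
  | succ m ih =>
    intro k ℓ hkl
    push_cast at hkl
    have h1 := ih (k - 1) ℓ (by omega)
    have h2 := ih k (ℓ - 1) (by omega)
    have r1 := Rcov_rec h (k - 1) (ℓ + 1)
    have r2 := Rcov_rec h k ℓ
    rw [maCoeff_of_neg α β (by omega)] at r1 r2
    rw [add_sub_cancel_right] at r1
    rw [sub_add_cancel] at h2
    have hpos : 0 < 1 / (α * β) := by positivity
    rw [r1, r2]
    calc _ = |α * (Rcov α β (k - 1 - 1) (ℓ + 1) - Rcov α β (k - 1) ℓ) +
            β * (Rcov α β (k - 1) ℓ - Rcov α β k (ℓ - 1))| := by congr 1; ring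
      _ ≤ |α| * (1 / (α * β)) + |β| * (1 / (α * β)) := by
        refine (abs_add_le _ _).trans ?_
        rw [abs_mul, abs_mul]
        gcongr
      _ ≤ 1 / (α * β) := by nlinarith

lemma Rcov_diff_le {α β : ℝ} (hαβ : 0 < α * β) (h : |α| + |β| < 1) (k ℓ : ℤ) :
    |Rcov α β (k - 1) (ℓ + 1) - Rcov α β k ℓ| ≤ 1 / (α * β) := by
  rcases le_or_gt 0 (k + ℓ) with hkl | hkl
  · exact Rcov_diff_of_nonneg hαβ h (k + ℓ).toNat k ℓ (by omega)
  · have := Rcov_diff_of_nonneg hαβ h (-(k + ℓ)).toNat (1 - k) (-ℓ - 1) (by omega)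
    rw [abs_sub_comm, ← Rcov_neg, ← Rcov_neg α β (1 - k - 1)] at this
    convert this using 5 <;> ring

theorem covariance_difference_uniform_bound :
    ∃ K > (0 : ℝ), ∀ α β : ℝ, 0 < α * β → |α| + |β| < 1 → ∀ k ℓ : ℤ,
      |Rcov α β (k - 1) (ℓ + 1) - Rcov α β k ℓ| ≤ K / (α * β) ^ ((3 : ℝ) / 2) := by
  refine ⟨1, one_pos, fun α β hαβ h k ℓ ↦ (Rcov_diff_le hαβ h k ℓ).trans ?_⟩
  have hle : α * β ≤ 1 := by
    rw [← abs_of_pos hαβ, abs_mul]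
    nlinarith [abs_nonneg α, abs_nonneg β]
  gcongr
  exact Real.rpow_le_self_of_le_one hαβ.le hle (by norm_num)
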